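/- arXiv:1806.05602 — 2 statements merged into one kernel-verified Lean document; each statement's English description precedes it below -/
import Mathlib

section
/- Let α be a finite type with cardinality 2M, let A be a subset of α with cardinality D, and let k ≤ M. Let N be the number of fixed-point-free involutions σ of α having at least k orbits {x, σ(x)} contained in A. Then N · C(2M, 2k) ≤ C(D, 2k) · C(M, k) · (2M−1)!!; equivalently, the proportion of fixed-point-free involutions of α with at least k orbits inside A, among all (2M−1)!! fixed-point-free involutions, is at most C(D, 2k) · C(M, k) / C(2M, 2k). -/
open Nat

/-!
If `σ` has at least `2k` points `x ∈ A` with `σ x ∈ A`, then these points form a union of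
`σ`-orbits, so `σ` stabilizes some `S ⊆ A` with `2k` elements. A fixed-point-free involution
stabilizing a given such `S` is a pair of fixed-point-free involutions, one of `S` and one of its
complement, so there are `(2k - 1)‼ (2(M - k) - 1)‼` of them. The union bound over the `C(D, 2k)`
choices of `S` then gives the inequality, because
`(2k - 1)‼ (2(M - k) - 1)‼ C(2M, 2k) = C(M, k) (2M - 1)‼`.
-/

section DoubleFactorial

-- For `m = 0` the truncated subtraction gives `0‼ = 1`, the usual value of `(-1)‼`.
theorem doubleFactorial_two_mul_sub_one_mul (m : ℕ) :
    (2 * m - 1)‼ * (2 ^ m * m !) = (2 * m)! := by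
  cases m with
  | zero => rfl
  | succ n =>
    rw [← doubleFactorial_two_mul, mul_comm]
    exact (factorial_eq_mul_doubleFactorial (2 * n + 1)).symm

theorem doubleFactorial_mul_doubleFactorial_mul_choose (k l : ℕ) :
    (2 * k - 1)‼ * (2 * l - 1)‼ * (2 * (k + l)).choose (2 * k) =
      (k + l).choose k * (2 * (k + l) - 1)‼ := by
  refine Nat.eq_of_mul_eq_mul_right (m := 2 ^ k * k ! * (2 ^ l * l !)) (by positivity) ?_
  calc (2 * k - 1)‼ * (2 * l - 1)‼ * (2 * (k + l)).choose (2 * k) * (2 ^ k * k ! * (2 ^ l * l !))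
      = (2 * k + 2 * l).choose (2 * k) * ((2 * k - 1)‼ * (2 ^ k * k !)) *
          ((2 * l - 1)‼ * (2 ^ l * l !)) := by rw [mul_add 2 k l]; ring
    _ = (2 * (k + l))! := by
      rw [doubleFactorial_two_mul_sub_one_mul, doubleFactorial_two_mul_sub_one_mul,
        choose_symm_add, add_choose_mul_factorial_mul_factorial, mul_add]
    _ = (2 * (k + l) - 1)‼ * (2 ^ (k + l) * ((k + l).choose k * k ! * l !)) := by
      rw [choose_symm_add, add_choose_mul_factorial_mul_factorial,
        doubleFactorial_two_mul_sub_one_mul]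
    _ = (k + l).choose k * (2 * (k + l) - 1)‼ * (2 ^ k * k ! * (2 ^ l * l !)) := by ring

end DoubleFactorial

section StableSubsets

variable {α : Type*} {f : α → α}

theorem apply_mem_insert_insert_iff [DecidableEq α] (hf : f.Involutive) {S : Finset α}
    (hS : ∀ y, f y ∈ S ↔ y ∈ S) (x y : α) :
    f y ∈ insert x (insert (f x) S) ↔ y ∈ insert x (insert (f x) S) := by
  simp only [Finset.mem_insert, hS, hf.injective.eq_iff, hf.eq_iff]
  tauto

theorem exists_stable_subset_card_eq_two_mul (hf : f.Involutive) (hfix : ∀ x, f x ≠ x)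
    {B : Finset α} (hB : ∀ x, f x ∈ B ↔ x ∈ B) {k : ℕ} (hk : 2 * k ≤ B.card) :
    ∃ S ⊆ B, S.card = 2 * k ∧ ∀ x, f x ∈ S ↔ x ∈ S := by
  classical
  induction k with
  | zero => exact ⟨∅, by simp⟩
  | succ k ih =>
    obtain ⟨S, hSB, hcard, hS⟩ := ih (by lia)
    obtain ⟨x, hxB, hxS⟩ := Finset.exists_mem_notMem_of_card_lt_card (s := S) (t := B) (by lia)
    have hfxS : f x ∉ S := mt (hS x).1 hxS
    have hx : x ∉ insert (f x) S := by simp [hxS, (hfix x).symm]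
    refine ⟨insert x (insert (f x) S), ?_, ?_, apply_mem_insert_insert_iff hf hS x⟩
    · simp [Finset.insert_subset_iff, hxB, hB, hSB]
    · rw [Finset.card_insert_of_notMem hx, Finset.card_insert_of_notMem hfxS, hcard]
      ring

end StableSubsets

section Permutations

open Equiv Finset

variable {α : Type*}

theorem apply_subtypeCongr_iff {p : α → Prop} [DecidablePred p] (σ : Perm {x // p x})
    (τ : Perm {x // ¬p x}) (x : α) : p (σ.subtypeCongr τ x) ↔ p x := by
  by_cases hx : p x
  · simpa [hx] using (σ ⟨x, hx⟩).2
  · simpa [hx] using (τ ⟨x, hx⟩).2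

theorem subtypeCongr_subtypePerm {p : α → Prop} [DecidablePred p] (σ : Perm α)
    (hσ : ∀ x, p (σ x) ↔ p x) :
    (σ.subtypePerm hσ).subtypeCongr (σ.subtypePerm fun x => not_congr (hσ x)) = σ := by
  ext x
  by_cases hx : p x <;> simp [hx]

theorem card_filter_cycleType_eq_replicate_mul [Fintype α] [DecidableEq α] {m n : ℕ}
    (hn : 2 ≤ n) (hα : Fintype.card α = n * m) :
    #{σ : Perm α | σ.cycleType = Multiset.replicate m n} * (n ^ m * m !) = (n * m)! := by
  have hsum : (Multiset.replicate m n).sum = n * m := by simp [mul_comm]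
  have hcount : ∏ i ∈ (Multiset.replicate m n).toFinset, ((Multiset.replicate m n).count i)! =
      m ! := by
    rcases eq_or_ne m 0 with rfl | hm
    · simp
    · simp [Multiset.toFinset_replicate, hm]
  have hparts : ∀ i ∈ Multiset.replicate m n, 2 ≤ i :=
    fun i hi => hn.trans_eq (Multiset.eq_of_mem_replicate hi).symm
  have hcard := Perm.card_of_cycleType_mul_eq α (Multiset.replicate m n)
  rwa [hsum, hcount, hα, Multiset.prod_replicate, if_pos ⟨le_rfl, hparts⟩, Nat.sub_self,
    factorial_zero, one_mul] at hcard

end Permutations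

/-- Fixed-point-free involutions of `α`, encoding the perfect matchings of `α` into the pairs
`{x, σ x}`. -/
def IsFixedPointFreeInvolution {α : Type*} (σ : Equiv.Perm α) : Prop :=
  ∀ x, σ (σ x) = x ∧ σ x ≠ x

namespace IsFixedPointFreeInvolution

open Equiv Finset

variable {α : Type*}

theorem involutive {σ : Perm α} (hσ : IsFixedPointFreeInvolution σ) : Function.Involutive σ :=
  fun x => (hσ x).1

theorem apply_ne {σ : Perm α} (hσ : IsFixedPointFreeInvolution σ) (x : α) : σ x ≠ x :=
  (hσ x).2

theorem subtypeCongr_iff {p : α → Prop} [DecidablePred p]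
    (σ : Perm {x // p x}) (τ : Perm {x // ¬p x}) :
    IsFixedPointFreeInvolution (σ.subtypeCongr τ) ↔
      IsFixedPointFreeInvolution σ ∧ IsFixedPointFreeInvolution τ := by
  constructor
  · refine fun h => ⟨fun x => ?_, fun x => ?_⟩
    · simpa [Subtype.ext_iff] using h x
    · simpa [Subtype.ext_iff] using h x
  · rintro ⟨hσ, hτ⟩ x
    by_cases hx : p x
    · simpa [hx, Subtype.ext_iff] using hσ ⟨x, hx⟩
    · simpa [hx, Subtype.ext_iff] using hτ ⟨x, hx⟩

variable [Fintype α] [DecidableEq α]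

instance : DecidablePred (IsFixedPointFreeInvolution (α := α)) :=
  fun σ => inferInstanceAs (Decidable (∀ x, σ (σ x) = x ∧ σ x ≠ x))

theorem iff_cycleType_eq_replicate {m : ℕ} (hα : Fintype.card α = 2 * m) (σ : Perm α) :
    IsFixedPointFreeInvolution σ ↔ σ.cycleType = Multiset.replicate m 2 := by
  have involutive_iff : (∀ x, σ (σ x) = x) ↔ ∀ c ∈ σ.cycleType, c = 2 := by
    rw [← Perm.pow_prime_eq_one_iff]
    simp [Equiv.ext_iff, pow_two]
  have fixedPointFree_iff : (∀ x, σ x ≠ x) ↔ σ.cycleType.sum = 2 * m := by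
    rw [Perm.sum_cycleType, ← hα, card_eq_iff_eq_univ, eq_univ_iff_forall]
    simp only [Perm.mem_support]
  rw [IsFixedPointFreeInvolution, forall_and, involutive_iff, fixedPointFree_iff, and_comm,
    Multiset.eq_replicate]
  refine and_congr_left fun htwo => ?_
  rw [Multiset.eq_replicate_card.2 htwo, Multiset.sum_replicate, Multiset.card_replicate,
    smul_eq_mul]
  lia

theorem card_filter_eq_doubleFactorial {m : ℕ} (hα : Fintype.card α = 2 * m) :
    #{σ : Perm α | IsFixedPointFreeInvolution σ} = (2 * m - 1)‼ := by
  refine Nat.eq_of_mul_eq_mul_right (m := 2 ^ m * m !) (by positivity) ?_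
  simp only [iff_cycleType_eq_replicate hα]
  rw [card_filter_cycleType_eq_replicate_mul le_rfl hα, doubleFactorial_two_mul_sub_one_mul]

theorem card_filter_stable_eq_mul (p : α → Prop) [DecidablePred p]
    [Fintype {x // p x}] [Fintype {x // ¬p x}] :
    #{σ : Perm α | IsFixedPointFreeInvolution σ ∧ ∀ x, p (σ x) ↔ p x} =
      #{σ : Perm {x // p x} | IsFixedPointFreeInvolution σ} *
        #{σ : Perm {x // ¬p x} | IsFixedPointFreeInvolution σ} := by
  rw [← card_product]
  symm
  refine card_nbij (Perm.subtypeCongrHom p) ?_ (Perm.subtypeCongrHom_injective p).injOn ?_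
  · rintro ⟨σ, τ⟩ h
    simp only [coe_product, coe_filter_univ, Set.mem_prod, Set.mem_ofPred_eq] at h
    simpa using ⟨(subtypeCongr_iff σ τ).2 h, apply_subtypeCongr_iff σ τ⟩
  · intro σ h
    obtain ⟨hσ, hp⟩ : IsFixedPointFreeInvolution σ ∧ ∀ x, p (σ x) ↔ p x := by simpa using h
    have hcongr := subtypeCongr_subtypePerm σ hp
    refine ⟨(_, _), ?_, hcongr⟩
    simpa using (subtypeCongr_iff _ _).1 (hcongr.symm ▸ hσ)

theorem card_filter_stable_eq_doubleFactorial {k l : ℕ} (hα : Fintype.card α = 2 * (k + l))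
    {S : Finset α} (hS : #S = 2 * k) :
    #{σ : Perm α | IsFixedPointFreeInvolution σ ∧ ∀ x, σ x ∈ S ↔ x ∈ S} =
      (2 * k - 1)‼ * (2 * l - 1)‼ := by
  have hSc : Fintype.card {x // x ∉ S} = 2 * l := by
    rw [Fintype.card_subtype_compl, Fintype.card_coe, hα, hS]
    lia
  rw [card_filter_stable_eq_mul (· ∈ S), card_filter_eq_doubleFactorial (by simpa using hS),
    card_filter_eq_doubleFactorial hSc]

theorem card_filter_le_sum_powersetCard (A : Finset α) (k : ℕ) :
    #{σ : Perm α | IsFixedPointFreeInvolution σ ∧ 2 * k ≤ #{x ∈ A | σ x ∈ A}} ≤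
      ∑ S ∈ A.powersetCard (2 * k),
        #{σ : Perm α | IsFixedPointFreeInvolution σ ∧ ∀ x, σ x ∈ S ↔ x ∈ S} := by
  refine (card_le_card fun σ h => ?_).trans card_biUnion_le
  obtain ⟨hσ, hk⟩ := (mem_filter_univ σ).1 h
  have hstable : ∀ x, σ x ∈ ({x ∈ A | σ x ∈ A} : Finset α) ↔ x ∈ ({x ∈ A | σ x ∈ A} : Finset α) :=
    fun x => by simp only [mem_filter, hσ.involutive x, and_comm]
  obtain ⟨S, hSA, hcard, hS⟩ :=
    exists_stable_subset_card_eq_two_mul hσ.involutive hσ.apply_ne hstable hk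
  exact mem_biUnion.2 ⟨S, mem_powersetCard.2 ⟨hSA.trans (filter_subset _ _), hcard⟩,
    (mem_filter_univ σ).2 ⟨hσ, hS⟩⟩

end IsFixedPointFreeInvolution

/-- Let `α` have cardinality `2M` and `A ⊆ α` have cardinality `D`, and let `k ≤ M`.
If `N` is the number of fixed-point-free involutions of `α` with at least `k` orbits
`{x, σ x}` contained in `A` (i.e., at least `2k` elements `x ∈ A` with `σ x ∈ A`), then
`N · C(2M, 2k) ≤ C(D, 2k) · C(M, k) · (2M−1)‼`; i.e., the proportion of such involutions
among all `(2M−1)‼` fixed-point-free involutions is at most `C(D,2k)·C(M,k)/C(2M,2k)`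
(the paper's main upper bound on the p-value, Equations (4) and (7)). -/
theorem pvalue_upper_bound_nat (M D k : ℕ) (α : Type*) [Fintype α] [DecidableEq α]
    (hα : Fintype.card α = 2 * M) (A : Finset α) (hA : A.card = D) (hk : k ≤ M)
    (N : ℕ)
    (hN : N = (Finset.univ.filter
        (fun σ : Equiv.Perm α =>
          (∀ x : α, σ (σ x) = x ∧ σ x ≠ x) ∧
          2 * k ≤ (A.filter (fun x => σ x ∈ A)).card)).card) :
    N * (2 * M).choose (2 * k) ≤ D.choose (2 * k) * M.choose k * (2 * M - 1)‼ := by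
  obtain ⟨l, rfl⟩ := Nat.exists_eq_add_of_le hk
  subst hN hA
  calc
    _ ≤ (∑ S ∈ A.powersetCard (2 * k), (Finset.univ.filter fun σ : Equiv.Perm α =>
          IsFixedPointFreeInvolution σ ∧ ∀ x, σ x ∈ S ↔ x ∈ S).card) *
        (2 * (k + l)).choose (2 * k) :=
      Nat.mul_le_mul_right _ (IsFixedPointFreeInvolution.card_filter_le_sum_powersetCard A k)
    _ = A.card.choose (2 * k) * ((2 * k - 1)‼ * (2 * l - 1)‼) * (2 * (k + l)).choose (2 * k) := by
      rw [Finset.sum_const_nat fun S hS =>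
          IsFixedPointFreeInvolution.card_filter_stable_eq_doubleFactorial hα
            (Finset.mem_powersetCard.1 hS).2,
        Finset.card_powersetCard]
    _ = A.card.choose (2 * k) * (k + l).choose k * (2 * (k + l) - 1)‼ := by
      rw [mul_assoc, doubleFactorial_mul_doubleFactorial_mul_choose, mul_assoc]
end

section
/- Let α be a finite type with cardinality 2M and let A be a subset of α with cardinality exactly 2k, where k ≤ M. Then the number of fixed-point-free involutions σ of α having at least k orbits {x, σ(x)} contained in A equals (2k−1)!! · (2(M−k)−1)!!. -/
open Nat

/-!
`A` has just `2k` elements, so a `σ` with at least `k` orbits inside `A` maps `A` into, hence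
onto, itself. Such a permutation is a pair of permutations of `A` and of its complement, and it is
a fixed-point-free involution exactly when both components are. The fixed-point-free involutions of
a set with `2n` elements are its permutations with `n` cycles, each of length two, and the count of
permutations of given cycle type gives `(2n)! / (2 ^ n * n!) = (2n - 1)‼` of them.
-/

open Equiv Finset

/-- The fixed-point-free involutions of `α`, which encode the perfect matchings of its elements
into pairs `{x, σ x}`. -/
def fixedPointFreeInvolutions (α : Type*) : Set (Perm α) :=
  {σ | ∀ x, σ (σ x) = x ∧ σ x ≠ x}

section Splitting

variable {α : Type*} (p : α → Prop) [DecidablePred p]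

theorem mem_range_subtypeCongrHom_iff {σ : Perm α} :
    σ ∈ Set.range (Perm.subtypeCongrHom p) ↔ ∀ x, p (σ x) ↔ p x := by
  constructor
  · rintro ⟨⟨τ, υ⟩, rfl⟩ x
    by_cases hx : p x
    · simpa [Perm.subtypeCongrHom, hx] using (τ ⟨x, hx⟩).2
    · simpa [Perm.subtypeCongrHom, hx] using (υ ⟨x, hx⟩).2
  · intro h
    refine ⟨(σ.subtypePerm h, σ.subtypePerm fun x => not_congr (h x)), ?_⟩
    ext x
    by_cases hx : p x <;> simp [Perm.subtypeCongrHom, hx]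

theorem preimage_subtypeCongrHom_fixedPointFreeInvolutions :
    Perm.subtypeCongrHom p ⁻¹' fixedPointFreeInvolutions α =
      fixedPointFreeInvolutions {x // p x} ×ˢ fixedPointFreeInvolutions {x // ¬p x} := by
  ext ⟨τ, υ⟩
  constructor
  · intro h
    exact ⟨fun x => by simpa [Perm.subtypeCongrHom, Subtype.ext_iff] using h x,
      fun x => by simpa [Perm.subtypeCongrHom, Subtype.ext_iff] using h x⟩
  · rintro ⟨hτ, hυ⟩ x
    by_cases hx : p x
    · simpa [Perm.subtypeCongrHom, hx, Subtype.ext_iff] using hτ ⟨x, hx⟩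
    · simpa [Perm.subtypeCongrHom, hx, Subtype.ext_iff] using hυ ⟨x, hx⟩

theorem ncard_fixedPointFreeInvolutions_inter_range_subtypeCongrHom :
    (fixedPointFreeInvolutions α ∩ Set.range (Perm.subtypeCongrHom p)).ncard =
      (fixedPointFreeInvolutions {x // p x}).ncard *
        (fixedPointFreeInvolutions {x // ¬p x}).ncard := by
  rw [← Set.image_preimage_eq_inter_range,
    Set.ncard_image_of_injective _ (Perm.subtypeCongrHom_injective p),
    preimage_subtypeCongrHom_fixedPointFreeInvolutions, Set.ncard_prod]

end Splitting

theorem factorial_eq_doubleFactorial_mul_doubleFactorial_pred (n : ℕ) : n ! = n‼ * (n - 1)‼ := by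
  cases n with
  | zero => rfl
  | succ n => exact factorial_eq_mul_doubleFactorial n

section Counting

variable {α : Type*} [Fintype α] {n : ℕ}

section CycleType

variable [DecidableEq α]

theorem card_cycleType_eq_replicate_mul {a : ℕ} (ha : 2 ≤ a) (hα : Fintype.card α = a * n) :
    #{σ : Perm α | σ.cycleType = .replicate n a} * (a ^ n * n !) = (a * n)! := by
  have count_factorial :
      ∏ i ∈ (Multiset.replicate n a).toFinset, ((Multiset.replicate n a).count i)! = n ! := by
    cases n with
    | zero => simp
    | succ n =>
      rw [Multiset.toFinset_replicate, if_neg n.succ_ne_zero, prod_singleton,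
        Multiset.count_replicate_self]
  have sum_eq_card : (Multiset.replicate n a).sum = Fintype.card α := by
    rw [Multiset.sum_replicate, smul_eq_mul, hα, mul_comm]
  have h := Perm.card_of_cycleType_mul_eq α (.replicate n a)
  rwa [if_pos ⟨sum_eq_card.le, fun b hb => (Multiset.eq_of_mem_replicate hb).symm ▸ ha⟩,
    count_factorial, sum_eq_card, Nat.sub_self, factorial_zero, one_mul,
    Multiset.prod_replicate, hα] at h

theorem cycleType_eq_replicate_iff_of_prime {q : ℕ} [hq : Fact q.Prime]
    (hα : Fintype.card α = q * n) {σ : Perm α} :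
    σ.cycleType = .replicate n q ↔ σ ^ q = 1 ∧ σ.support = univ := by
  rw [Perm.pow_prime_eq_one_iff, ← card_eq_iff_eq_univ, ← σ.sum_cycleType, hα,
    Multiset.eq_replicate, and_comm]
  refine and_congr_right fun h => ?_
  rw [Multiset.eq_replicate_card.2 h, Multiset.card_replicate, Multiset.sum_replicate,
    smul_eq_mul, mul_comm, Nat.mul_right_inj hq.out.ne_zero]

theorem mem_fixedPointFreeInvolutions_iff_cycleType (hα : Fintype.card α = 2 * n) {σ : Perm α} :
    σ ∈ fixedPointFreeInvolutions α ↔ σ.cycleType = .replicate n 2 := by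
  rw [cycleType_eq_replicate_iff_of_prime hα, Perm.ext_iff, eq_univ_iff_forall, ← forall_and]
  simp only [pow_two, Perm.mul_apply, Perm.one_apply, Perm.mem_support]
  rfl

end CycleType

theorem ncard_fixedPointFreeInvolutions (hα : Fintype.card α = 2 * n) :
    (fixedPointFreeInvolutions α).ncard = (2 * n - 1)‼ := by
  classical
  have coe_filter_cycleType : fixedPointFreeInvolutions α =
      ↑({σ | σ.cycleType = .replicate n 2} : Finset (Perm α)) := by
    ext σ
    simp only [mem_fixedPointFreeInvolutions_iff_cycleType hα, coe_filter_univ, Set.mem_ofPred_eq]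
  rw [coe_filter_cycleType, Set.ncard_coe_finset]
  apply Nat.eq_of_mul_eq_mul_right (2 * n).doubleFactorial_pos
  calc #{σ : Perm α | σ.cycleType = .replicate n 2} * (2 * n)‼
      = #{σ : Perm α | σ.cycleType = .replicate n 2} * (2 ^ n * n !) := by
        rw [doubleFactorial_two_mul]
    _ = (2 * n)! := card_cycleType_eq_replicate_mul le_rfl hα
    _ = (2 * n - 1)‼ * (2 * n)‼ := by
        rw [factorial_eq_doubleFactorial_mul_doubleFactorial_pred, mul_comm]

end Counting

theorem card_le_card_filter_apply_mem_iff {α : Type*} [DecidableEq α] {f : α → α}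
    (hf : Function.Involutive f) {A : Finset α} :
    #A ≤ #{x ∈ A | f x ∈ A} ↔ ∀ x, f x ∈ A ↔ x ∈ A := by
  rw [(card_filter_le A _).ge_iff_eq, card_filter_eq_iff]
  exact ⟨fun h x => ⟨fun hx => hf x ▸ h _ hx, h x⟩, fun h x => (h x).2⟩

/-- Let `α` have cardinality `2M` and let `A ⊆ α` have cardinality exactly `2k`, `k ≤ M`.
The number of fixed-point-free involutions of `α` having at least `k` orbits `{x, σ x}`
contained in `A` (i.e., at least `2k` elements `x ∈ A` with `σ x ∈ A`) equals
`(2k−1)‼ · (2(M−k)−1)‼` (the exact count in the paper's tightness argument). -/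
theorem card_involutions_orbits_eq (M k : ℕ) (α : Type*) [Fintype α] [DecidableEq α]
    (hα : Fintype.card α = 2 * M) (A : Finset α) (hA : A.card = 2 * k) (hk : k ≤ M) :
    (Finset.univ.filter
        (fun σ : Equiv.Perm α =>
          (∀ x : α, σ (σ x) = x ∧ σ x ≠ x) ∧
          2 * k ≤ (A.filter (fun x => σ x ∈ A)).card)).card
      = (2 * k - 1)‼ * (2 * (M - k) - 1)‼ := by
  have card_mem : Fintype.card {x // x ∈ A} = 2 * k := by rw [Fintype.card_coe, hA]
  have card_notMem : Fintype.card {x // x ∉ A} = 2 * (M - k) := by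
    rw [Fintype.card_subtype_compl, hα, card_mem, Nat.mul_sub]
  calc
    _ = (fixedPointFreeInvolutions α ∩ Set.range (Perm.subtypeCongrHom (· ∈ A))).ncard := by
      rw [← Set.ncard_coe_finset]
      congr 1
      ext σ
      rw [coe_filter_univ, Set.mem_inter_iff, mem_range_subtypeCongrHom_iff, ← hA]
      exact and_congr_right fun hσ => card_le_card_filter_apply_mem_iff fun x => (hσ x).1
    _ = (fixedPointFreeInvolutions {x // x ∈ A}).ncard *
          (fixedPointFreeInvolutions {x // x ∉ A}).ncard :=
      ncard_fixedPointFreeInvolutions_inter_range_subtypeCongrHom _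
    _ = (2 * k - 1)‼ * (2 * (M - k) - 1)‼ := by
      rw [ncard_fixedPointFreeInvolutions card_mem, ncard_fixedPointFreeInvolutions card_notMem]
end
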